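/- arXiv:2208.06812 — 4 statements merged into one kernel-verified Lean document; each statement's English description precedes it below -/
import Mathlib

section
/- Let E be a real Banach space, P ⊆ E a cone, and (X, p) a double controlled cone metric space with respect to functions α, β : X × X → [1,∞). Suppose T : X → X satisfies p(Tx, Ty) ≼ a·p(x, Tx) + b·p(y, Ty) for all x, y ∈ X, where a, b ∈ [0,1) and a + b < 1. Fix x₀ ∈ X and set x_n = Tⁿx₀. Then p(x_n, x_{n+1}) ≼ (a/(1−b))ⁿ · p(x₀, x₁) for all n ≥ 0. -/
open Filter Topology Set

variable {E : Type*} [NormedAddCommGroup E] [NormedSpace ℝ E] [CompleteSpace E]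
variable {X : Type*}

/-- A subset `P` of a real Banach space is a cone. -/
def IsConeSet (P : Set E) : Prop :=
  IsClosed P ∧ P.Nonempty ∧ P ≠ {0} ∧
    (∀ x ∈ P, ∀ y ∈ P, ∀ a b : ℝ, 0 ≤ a → 0 ≤ b → a • x + b • y ∈ P) ∧
    P ∩ (-P) = {0}

/-- The partial order induced by the cone `P`: `x ≼ y` iff `y - x ∈ P`. -/
def coneLE (P : Set E) (x y : E) : Prop := y - x ∈ P

/-- The strict relation induced by the cone `P`: `x ≪ y` iff `y - x ∈ int P`. -/
def coneLT (P : Set E) (x y : E) : Prop := y - x ∈ interior P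

/-- `P` is a normal cone with normal constant `M`. -/
def IsNormalCone (P : Set E) (M : ℝ) : Prop :=
  0 < M ∧ ∀ x y : E, coneLE P 0 x → coneLE P x y → ‖x‖ ≤ M * ‖y‖

/-- `p` is a double controlled cone metric on `X` with respect to the control
functions `α, β : X × X → [1,∞)`, relative to the cone `P`. -/
def IsDCCM (P : Set E) (α β : X → X → ℝ) (p : X → X → E) : Prop :=
  (∀ x y : X, 1 ≤ α x y) ∧ (∀ x y : X, 1 ≤ β x y) ∧
  (∀ x y : X, coneLE P 0 (p x y)) ∧ (∀ x y : X, p x y = 0 ↔ x = y) ∧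
  (∀ x y : X, p x y = p y x) ∧
  (∀ x y z : X, coneLE P (p x y) (α x z • p x z + β z y • p z y))

/-- Convergence of a sequence in a double controlled cone metric space. -/
def DCCMConv (P : Set E) (p : X → X → E) (s : ℕ → X) (x : X) : Prop :=
  ∀ c : E, coneLT P 0 c → ∃ N : ℕ, ∀ n > N, coneLT P (p (s n) x) c

/-- Cauchy sequences in a double controlled cone metric space. -/
def DCCMCauchy (P : Set E) (p : X → X → E) (s : ℕ → X) : Prop :=
  ∀ c : E, coneLT P 0 c → ∃ N : ℕ, ∀ m > N, ∀ n > N, coneLT P (p (s m) (s n)) c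

/-- Completeness of a double controlled cone metric space. -/
def DCCMComplete (P : Set E) (p : X → X → E) : Prop :=
  ∀ s : ℕ → X, DCCMCauchy P p s → ∃ x : X, DCCMConv P p s x

/-- For a Kannan-type contraction, the Picard iterates satisfy
`p(xₙ, xₙ₊₁) ≼ (a/(1-b))ⁿ • p(x₀, x₁)`. -/
theorem picard_iterates_kannan
    [Nonempty X] (P : Set E) (hP : IsConeSet P)
    (α β : X → X → ℝ) (p : X → X → E) (hp : IsDCCM P α β p)
    (T : X → X) (a b : ℝ) (ha0 : 0 ≤ a) (ha1 : a < 1) (hb0 : 0 ≤ b) (hb1 : b < 1)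
    (hab : a + b < 1)
    (hT : ∀ x y : X, coneLE P (p (T x) (T y)) (a • p x (T x) + b • p y (T y)))
    (x0 : X) (xs : ℕ → X) (hxs : ∀ n, xs n = T^[n] x0) :
    ∀ n : ℕ, coneLE P (p (xs n) (xs (n + 1)))
      ((a / (1 - b)) ^ n • p (xs 0) (xs 1)) := by
  have hs : ∀ n, xs (n + 1) = T (xs n) := fun n => by
    rw [hxs, hxs, Function.iterate_succ_apply']
  obtain ⟨-, -, -, hcone, hcap⟩ := hP
  have h0 : (0 : E) ∈ P := by
    have h : (0 : E) ∈ P ∩ (-P) := by rw [hcap]; rfl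
    exact h.1
  have hb : 0 < 1 - b := by linarith
  intro n
  induction n with
  | zero => simpa [coneLE] using h0
  | succ n ih =>
    have h1 := hT (xs n) (xs (n + 1))
    rw [← hs, ← hs] at h1
    unfold coneLE at *
    have h2 := hcone _ h1 _ ih (1 / (1 - b)) (a / (1 - b)) (by positivity) (by positivity)
    convert h2 using 1
    rw [pow_succ]
    match_scalars <;> field_simp <;> ring
end

section
/- Let E be a real Banach space, P ⊆ E a cone, and (X, p) a double controlled cone metric space with respect to functions α, β : X × X → [1,∞). Suppose T : X → X satisfies p(Tx, Ty) ≼ a·p(x, Tx) + b·p(y, Ty) + c·p(x, y) for all x, y ∈ X, where a, b, c ∈ [0,1) and a + b + c < 1. Fix x₀ ∈ X and set x_n = Tⁿx₀. Then p(x_n, x_{n+1}) ≼ ((a+c)/(1−b))ⁿ · p(x₀, x₁) for all n ≥ 0. -/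
open Filter Topology Set

variable {E : Type*} [NormedAddCommGroup E] [NormedSpace ℝ E] [CompleteSpace E]
variable {X : Type*}

/-- For a Reich-type contraction, the Picard iterates satisfy
`p(xₙ, xₙ₊₁) ≼ ((a+c)/(1-b))ⁿ • p(x₀, x₁)`. -/
theorem picard_iterates_reich
    [Nonempty X] (P : Set E) (hP : IsConeSet P)
    (α β : X → X → ℝ) (p : X → X → E) (hp : IsDCCM P α β p)
    (T : X → X) (a b c : ℝ) (ha0 : 0 ≤ a) (ha1 : a < 1) (hb0 : 0 ≤ b) (hb1 : b < 1)
    (hc0 : 0 ≤ c) (hc1 : c < 1) (habc : a + b + c < 1)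
    (hT : ∀ x y : X, coneLE P (p (T x) (T y))
      (a • p x (T x) + b • p y (T y) + c • p x y))
    (x0 : X) (xs : ℕ → X) (hxs : ∀ n, xs n = T^[n] x0) :
    ∀ n : ℕ, coneLE P (p (xs n) (xs (n + 1)))
      (((a + c) / (1 - b)) ^ n • p (xs 0) (xs 1)) := by
  obtain ⟨-, ⟨w, hw⟩, -, hcomb, -⟩ := hP
  have hb : 0 < 1 - b := by linarith
  have hstep : ∀ n, xs (n + 1) = T (xs n) := by
    intro n
    rw [hxs, hxs, Function.iterate_succ_apply']
  intro n
  induction n with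
  | zero =>
    have h := hcomb w hw w hw 0 0 le_rfl le_rfl
    simpa [coneLE] using h
  | succ n ih =>
    have h := hT (xs n) (xs (n + 1))
    rw [← hstep, ← hstep] at h
    unfold coneLE at h ih ⊢
    have h2 := hcomb _ ih _ h ((a + c) / (1 - b)) (1 / (1 - b)) (by positivity) (by positivity)
    convert h2 using 1
    generalize p (xs n) (xs (n + 1)) = u
    generalize p (xs (n + 1)) (xs (n + 1 + 1)) = v
    have hb' : (1 - b) ≠ 0 := hb.ne'
    match_scalars
    · rw [pow_succ]
      ring
    · field_simp
      ring
    · field_simp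
      ring
end

section
/- Let E be a real Banach space, P ⊆ E a cone, and (X, p) a double controlled cone metric space with respect to functions α, β : X × X → [1,∞). Let (x_n) be any sequence in X. Then for all integers m > n + 1, p(x_n, x_m) ≼ α(x_n, x_{n+1})·p(x_n, x_{n+1}) + Σ_{i=n+1}^{m−2} (Π_{j=n+1}^{i} β(x_j, x_m)) · α(x_i, x_{i+1}) · p(x_i, x_{i+1}) + (Π_{k=n+1}^{m−1} β(x_k, x_m)) · p(x_{m−1}, x_m). -/
open Filter Topology Set

variable {E : Type*} [NormedAddCommGroup E] [NormedSpace ℝ E] [CompleteSpace E]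
variable {X : Type*}

/-- The extended triangle-type inequality along a sequence in a double
controlled cone metric space. -/
theorem extended_triangle_inequality
    [Nonempty X] (P : Set E) (hP : IsConeSet P)
    (α β : X → X → ℝ) (p : X → X → E) (hp : IsDCCM P α β p)
    (s : ℕ → X) :
    ∀ m n : ℕ, n + 1 < m →
      coneLE P (p (s n) (s m))
        (α (s n) (s (n + 1)) • p (s n) (s (n + 1))
          + ∑ i ∈ Finset.Icc (n + 1) (m - 2),
              ((∏ j ∈ Finset.Icc (n + 1) i, β (s j) (s m)) * α (s i) (s (i + 1)))
                • p (s i) (s (i + 1))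
          + (∏ k ∈ Finset.Icc (n + 1) (m - 1), β (s k) (s m)) • p (s (m - 1)) (s m)) := by
  obtain ⟨-, -, -, hadd, -⟩ := hP
  obtain ⟨-, hβ, -, -, -, htri⟩ := hp
  intro m n hmn
  have key : ∀ k : ℕ, coneLE P (p (s n) (s m))
        (α (s n) (s (n + 1)) • p (s n) (s (n + 1))
          + ∑ i ∈ Finset.Icc (n + 1) (n + k),
              ((∏ j ∈ Finset.Icc (n + 1) i, β (s j) (s m)) * α (s i) (s (i + 1)))
                • p (s i) (s (i + 1))
          + (∏ j ∈ Finset.Icc (n + 1) (n + k + 1), β (s j) (s m))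
              • p (s (n + k + 1)) (s m)) := by
    intro k
    induction k with
    | zero => simpa using htri (s n) (s m) (s (n + 1))
    | succ k ih =>
      have h := htri (s (n + k + 1)) (s m) (s (n + k + 1 + 1))
      have hnn : 0 ≤ ∏ j ∈ Finset.Icc (n + 1) (n + k + 1), β (s j) (s m) :=
        Finset.prod_nonneg fun j _ => zero_le_one.trans (hβ _ _)
      unfold coneLE at ih h ⊢
      have h2 := hadd _ ih _ h 1 _ zero_le_one hnn
      rw [← add_assoc n k 1, Finset.sum_Icc_succ_top (by omega),
        Finset.prod_Icc_succ_top (b := n + k + 1) (by omega)]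
      convert h2 using 1
      module
  obtain ⟨k, rfl⟩ : ∃ k, m = n + k + 2 := ⟨m - n - 2, by omega⟩
  exact key k
end

section
/- Let E = ℝ², P = {(u, v) ∈ ℝ² : u ≥ 0 and v ≥ 0}, and X = {(x, 0) : 0 ≤ x ≤ 1} ∪ {(0, x) : 0 ≤ x ≤ 1} ⊆ ℝ². Define p : X × X → ℝ² by p((x,0),(y,0)) = ((4/3)|x − y|, |x − y|), p((0,x),(0,y)) = (|x − y|, (2/3)|x − y|), and p((x,0),(0,y)) = p((0,y),(x,0)) = ((4/3)x + y, x + (2/3)y). Then p is a cone metric on X with respect to the cone P: p(X,Y) ∈ P with p(X,Y) = 0 iff X = Y, p(X,Y) = p(Y,X), and p(X,Y) ≼ p(X,Z) + p(Z,Y) for all X, Y, Z ∈ X; consequently p is a double controlled cone metric with respect to any functions α, β : X × X → [1,∞). -/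
open Filter Topology Set

/-- The positive cone in `ℝ²`. -/
def conePos : Set (ℝ × ℝ) := {v | 0 ≤ v.1 ∧ 0 ≤ v.2}

/-- The order `u ≼ v` on `ℝ²` induced by the cone `conePos`. -/
def coneLE2 (u v : ℝ × ℝ) : Prop := v - u ∈ conePos

/-- The set `X = {(x,0) : 0 ≤ x ≤ 1} ∪ {(0,x) : 0 ≤ x ≤ 1}` of Example 2. -/
def XEx : Set (ℝ × ℝ) :=
  {v | (0 ≤ v.1 ∧ v.1 ≤ 1 ∧ v.2 = 0) ∨ (v.1 = 0 ∧ 0 ≤ v.2 ∧ v.2 ≤ 1)}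

/-- The map `p` of Example 2 is a cone metric on `X` with respect to the
positive cone of `ℝ²`; consequently it is a double controlled cone metric with
respect to any control functions `α, β : X × X → [1,∞)`. -/
theorem pAxes_coneMetric (p : ℝ × ℝ → ℝ × ℝ → ℝ × ℝ)
    (hp1 : ∀ x y : ℝ, 0 ≤ x → x ≤ 1 → 0 ≤ y → y ≤ 1 →
      p (x, 0) (y, 0) = (4 / 3 * |x - y|, |x - y|))
    (hp2 : ∀ x y : ℝ, 0 ≤ x → x ≤ 1 → 0 ≤ y → y ≤ 1 →
      p (0, x) (0, y) = (|x - y|, 2 / 3 * |x - y|))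
    (hp3 : ∀ x y : ℝ, 0 ≤ x → x ≤ 1 → 0 ≤ y → y ≤ 1 →
      p (x, 0) (0, y) = (4 / 3 * x + y, x + 2 / 3 * y) ∧
      p (0, y) (x, 0) = (4 / 3 * x + y, x + 2 / 3 * y)) :
    (∀ u ∈ XEx, ∀ v ∈ XEx,
      p u v ∈ conePos ∧ (p u v = 0 ↔ u = v) ∧ p u v = p v u) ∧
    (∀ u ∈ XEx, ∀ v ∈ XEx, ∀ w ∈ XEx, coneLE2 (p u v) (p u w + p w v)) ∧
    (∀ α β : ℝ × ℝ → ℝ × ℝ → ℝ, (∀ u v, 1 ≤ α u v) → (∀ u v, 1 ≤ β u v) →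
      ∀ u ∈ XEx, ∀ v ∈ XEx, ∀ w ∈ XEx,
        coneLE2 (p u v) (α u w • p u w + β w v • p w v)) := by
  have key : ∀ u ∈ XEx, ∀ v ∈ XEx, p u v =
      (4 / 3 * |u.1 - v.1| + |u.2 - v.2|, |u.1 - v.1| + 2 / 3 * |u.2 - v.2|) := by
    rintro ⟨a, b⟩ hu ⟨c, d⟩ hv
    rcases hu with ⟨h1, h2, h3⟩ | ⟨h1, h2, h3⟩ <;>
    rcases hv with ⟨k1, k2, k3⟩ | ⟨k1, k2, k3⟩ <;>
    dsimp only at h1 h2 h3 k1 k2 k3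
    · subst h3 k3
      rw [hp1 a c h1 h2 k1 k2]; simp
    · subst h3 k1
      rw [(hp3 a d h1 h2 k2 k3).1]; simp [abs_of_nonneg h1, abs_of_nonneg k2]
    · subst h1 k3
      rw [(hp3 c b k1 k2 h2 h3).2]; simp [abs_of_nonneg h2, abs_of_nonneg k1]
    · subst h1 k1
      rw [hp2 b d h2 h3 k2 k3]; simp
  have pos : ∀ u ∈ XEx, ∀ v ∈ XEx, 0 ≤ (p u v).1 ∧ 0 ≤ (p u v).2 := by
    intro u hu v hv
    rw [key u hu v hv]
    constructor <;> dsimp only <;> positivity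
  have tri : ∀ u ∈ XEx, ∀ v ∈ XEx, ∀ w ∈ XEx,
      (p u v).1 ≤ (p u w).1 + (p w v).1 ∧ (p u v).2 ≤ (p u w).2 + (p w v).2 := by
    intro u hu v hv w hw
    rw [key u hu v hv, key u hu w hw, key w hw v hv]
    have t1 := abs_sub_le u.1 w.1 v.1
    have t2 := abs_sub_le u.2 w.2 v.2
    constructor <;> dsimp only <;> linarith
  refine ⟨fun u hu v hv => ⟨pos u hu v hv, ⟨fun h => ?_, fun h => ?_⟩, ?_⟩, ?_, ?_⟩
  · rw [key u hu v hv] at h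
    have e := congrArg Prod.fst h
    simp only [Prod.fst_zero] at e
    have n1 := abs_nonneg (u.1 - v.1)
    have n2 := abs_nonneg (u.2 - v.2)
    have e1 : |u.1 - v.1| = 0 := by linarith
    have e2 : |u.2 - v.2| = 0 := by linarith
    exact Prod.ext (sub_eq_zero.1 (abs_eq_zero.1 e1)) (sub_eq_zero.1 (abs_eq_zero.1 e2))
  · subst h
    rw [key u hu u hu]; simp
  · rw [key u hu v hv, key v hv u hu, abs_sub_comm u.1, abs_sub_comm u.2]
  · intro u hu v hv w hw
    obtain ⟨t1, t2⟩ := tri u hu v hv w hw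
    exact ⟨sub_nonneg.2 t1, sub_nonneg.2 t2⟩
  · intro α β hα hβ u hu v hv w hw
    obtain ⟨t1, t2⟩ := tri u hu v hv w hw
    obtain ⟨a1, a2⟩ := pos u hu w hw
    obtain ⟨b1, b2⟩ := pos w hw v hv
    have c1 := le_mul_of_one_le_left a1 (hα u w)
    have c2 := le_mul_of_one_le_left a2 (hα u w)
    have d1 := le_mul_of_one_le_left b1 (hβ w v)
    have d2 := le_mul_of_one_le_left b2 (hβ w v)
    refine ⟨?_, ?_⟩
    · simp only [Prod.fst_sub, Prod.fst_add, Prod.smul_fst, smul_eq_mul]; linarith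
    · simp only [Prod.snd_sub, Prod.snd_add, Prod.smul_snd, smul_eq_mul]; linarith
end
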